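/- arXiv:2510.23903 — 3 statements merged into one kernel-verified Lean document; each statement's English description precedes it below -/
import Mathlib

section
/- For every composition σ = (r_1,...,r_k) of a positive integer n, there exist nonnegative integers γ_0, γ_1, ..., γ_{⌊n/2⌋} such that the polynomial h(σ,t) = Σ_{i=0}^{n} h_i(σ) t^i satisfies h(σ,t) = Σ_{i=0}^{⌊n/2⌋} γ_i t^i (1+t)^{n-2i} (i.e., h(σ,t) is gamma-positive). -/
open Finset Polynomial

/-- `pSum σ i = r₁ + ⋯ + rᵢ`, the `i`-th partial sum of the composition `σ`. -/
def pSum (σ : List ℕ) (i : ℕ) : ℕ := (σ.take i).sum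

/-- Membership in the set `P_σ ⊆ ℕⁿ`: the partial sum of the first `s_i`
coordinates is at most `s_i` for every `i ∈ [k]`. -/
def memP (n : ℕ) (σ : List ℕ) (a : Fin n → ℕ) : Prop :=
  ∀ i, 1 ≤ i → i ≤ σ.length →
    (∑ j ∈ Finset.univ.filter (fun j : Fin n => (j : ℕ) < pSum σ i), a j) ≤ pSum σ i

/-- The number of nonzero coordinates of a tuple. -/
def nonzeroCount {n : ℕ} (a : Fin n → ℕ) : ℕ :=
  (Finset.univ.filter (fun j => a j ≠ 0)).card

/-- `h_i(σ)`: the number of points of `P_σ` with exactly `i` nonzero coordinates. -/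
noncomputable def hVec (n : ℕ) (σ : List ℕ) (i : ℕ) : ℕ :=
  {a : Fin n → ℕ | memP n σ a ∧ nonzeroCount a = i}.ncard

/-!
A tuple `a ∈ ℕⁿ` with total at most `n` is determined by the set `S` of positions of its nonzero
coordinates and the set `T` of its nonzero partial sums, and every pair of equinumerous subsets of
`[n]` arises in this way. A partial sum `a₁ + ⋯ + aₛ` is at most `m` exactly when
`|S ∩ [s]| ≤ |T ∩ [m]|`, so membership in `P_σ` compares `|S ∩ [s]|` with `|T ∩ [s]|` at each
partial sum `s` of `σ`. Since both sides are taken at the same `s`, adding the same elements to `S`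
and `T`, or removing them from both, does not affect the comparison: each admissible disjoint pair
`(D, U)` with `|D| = |U| = i` gives rise to the admissible pairs `(D ∪ E, U ∪ E)` with
`E ⊆ [n] \ (D ∪ U)`, which contribute `tⁱ (1 + t) ^ (n - 2i)`. Hence `γᵢ` counts the admissible
disjoint pairs of `i`-element sets.
-/

section GeneratingFunction

variable {ι α R : Type*} [CommSemiring R]

lemma sum_comp_eq_sum_range_card_smul (s : Finset ι) {f : ι → ℕ} {N : ℕ}
    (hf : ∀ i ∈ s, f i < N) (g : ℕ → R) :
    ∑ i ∈ s, g (f i) = ∑ k ∈ range N, #{i ∈ s | f i = k} • g k := by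
  simp_rw [← sum_fiberwise_of_maps_to' (fun i hi ↦ mem_range.2 (hf i hi)) g, sum_const]

lemma two_mul_card_le_of_disjoint [Fintype α] {D U : Finset α} (hDU : Disjoint D U)
    (hcard : #D = #U) : 2 * #D ≤ Fintype.card α := by
  have hunion := card_disjUnion D U hDU
  have huniv := card_le_univ (D.disjUnion U hDU)
  omega

variable [DecidableEq α]

lemma union_sdiff_union_of_disjoint {D U E : Finset α} (hDU : Disjoint D U) (hDE : Disjoint D E) :
    (D ∪ E) \ (U ∪ E) = D := by
  rw [union_sdiff_distrib, sdiff_eq_empty_iff_subset.2 subset_union_right, union_empty]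
  exact sdiff_eq_self_of_disjoint (disjoint_union_right.2 ⟨hDU, hDE⟩)

lemma union_inter_union_of_disjoint {D U : Finset α} (hDU : Disjoint D U) (E : Finset α) :
    (D ∪ E) ∩ (U ∪ E) = E := by
  rw [← inter_union_distrib_right, disjoint_iff_inter_eq_empty.1 hDU, empty_union]

lemma pow_card_mul_one_add_pow_eq_sum [Fintype α] {D U : Finset α} (hDU : Disjoint D U)
    (hcard : #D = #U) (x : R) :
    x ^ #D * (1 + x) ^ (Fintype.card α - 2 * #D) = ∑ E ∈ (D ∪ U)ᶜ.powerset, x ^ (#D + #E) := by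
  have hcompl : #(D ∪ U)ᶜ = Fintype.card α - 2 * #D := by
    rw [card_compl, card_union_of_disjoint hDU, ← hcard, two_mul]
  have hbinom := sum_pow_mul_eq_add_pow x 1 (D ∪ U)ᶜ
  simp only [one_pow, mul_one] at hbinom
  simp_rw [← hcompl, add_comm 1 x, ← hbinom, mul_sum, pow_add]

theorem sum_pow_card_eq_sum_disjoint [Fintype α] (P : Finset α → Finset α → Prop)
    [∀ S T, Decidable (P S T)] (hcard : ∀ S T, P S T → #S = #T)
    (hsdiff : ∀ S T, P (S \ T) (T \ S) ↔ P S T) (x : R) :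
    ∑ p : Finset α × Finset α with P p.1 p.2, x ^ #p.1 =
      ∑ q : Finset α × Finset α with Disjoint q.1 q.2 ∧ P q.1 q.2,
        x ^ #q.1 * (1 + x) ^ (Fintype.card α - 2 * #q.1) := by
  have hexpand : ∀ q ∈ ({q | Disjoint q.1 q.2 ∧ P q.1 q.2} : Finset (Finset α × Finset α)),
      x ^ #q.1 * (1 + x) ^ (Fintype.card α - 2 * #q.1) =
        ∑ E ∈ (q.1 ∪ q.2)ᶜ.powerset, x ^ (#q.1 + #E) := fun q hq ↦ by
    obtain ⟨hdisj, hP⟩ := (mem_filter.1 hq).2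
    exact pow_card_mul_one_add_pow_eq_sum hdisj (hcard _ _ hP) x
  have hdisj {D U E : Finset α} (hE : E ⊆ (D ∪ U)ᶜ) : Disjoint D E ∧ Disjoint U E := by
    rwa [← disjoint_union_left, ← subset_compl_iff_disjoint_left]
  rw [sum_congr rfl hexpand, sum_sigma']
  refine sum_bij' (fun p _ ↦ ⟨(p.1 \ p.2, p.2 \ p.1), p.1 ∩ p.2⟩)
    (fun q _ ↦ (q.1.1 ∪ q.2, q.1.2 ∪ q.2)) ?_ ?_ ?_ ?_ ?_ <;>
    simp only [mem_filter_univ, mem_sigma, mem_powerset, Prod.forall, Sigma.forall, and_imp]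
  · refine fun S T hP ↦ ⟨⟨disjoint_sdiff_sdiff, (hsdiff S T).2 hP⟩, ?_⟩
    rw [subset_compl_iff_disjoint_left, disjoint_union_left]
    exact ⟨disjoint_sdiff_inter S T, inter_comm S T ▸ disjoint_sdiff_inter T S⟩
  · intro D U E hDU hP hE
    rwa [← hsdiff, union_sdiff_union_of_disjoint hDU (hdisj hE).1,
      union_sdiff_union_of_disjoint hDU.symm (hdisj hE).2]
  · intro S T _
    rw [sdiff_union_inter, inter_comm, sdiff_union_inter]
  · intro D U E hDU _ hE
    rw [union_sdiff_union_of_disjoint hDU (hdisj hE).1,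
      union_sdiff_union_of_disjoint hDU.symm (hdisj hE).2, union_inter_union_of_disjoint hDU]
  · intro S T _
    rw [card_sdiff_add_card_inter]

end GeneratingFunction

section PrefixSums

variable {n : ℕ}

/-- The sum of the first `s` coordinates of `a`, or of all of them if `n ≤ s`. -/
def prefixSum (a : Fin n → ℕ) (s : ℕ) : ℕ := ∑ j : Fin n with j.val < s, a j

/-- The number `|S ∩ [s]|` of elements of `S` among the first `s` positions. -/
def prefixCard (S : Finset (Fin n)) (s : ℕ) : ℕ := #{j ∈ S | j.val < s}

lemma prefixSum_zero (a : Fin n → ℕ) : prefixSum a 0 = 0 := by simp [prefixSum]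

lemma prefixSum_min (a : Fin n → ℕ) (s : ℕ) : prefixSum a (min s n) = prefixSum a s := by
  simp [prefixSum]

lemma prefixSum_le_prefixSum_self (a : Fin n → ℕ) (s : ℕ) : prefixSum a s ≤ prefixSum a n :=
  sum_le_sum_of_subset (monotone_filter_right _ fun j _ _ ↦ j.isLt)

lemma prefixSum_succ (a : Fin n → ℕ) (j : Fin n) :
    prefixSum a (j + 1) = prefixSum a j + a j := by
  have hinsert : ({k : Fin n | k.val < j + 1} : Finset (Fin n)) =
      insert j ({k : Fin n | k.val < j} : Finset (Fin n)) := by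
    ext k
    simp only [mem_filter_univ, mem_insert, Fin.ext_iff]
    omega
  rw [prefixSum, hinsert, sum_insert (by simp), add_comm, prefixSum]

lemma prefixSum_mono (a : Fin n → ℕ) : Monotone (prefixSum a) := fun _ _ h ↦
  sum_le_sum_of_subset (monotone_filter_right _ fun _ _ hj ↦ hj.trans_le h)

lemma prefixSum_injective : Function.Injective (prefixSum : (Fin n → ℕ) → ℕ → ℕ) := by
  intro a b h
  funext j
  have ha := prefixSum_succ a j
  rw [h, prefixSum_succ] at ha
  omega

lemma prefixSum_tsub {f : ℕ → ℕ} (hf : Monotone f) (s : ℕ) :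
    prefixSum (fun j : Fin n ↦ f (j + 1) - f j) s = f (min s n) - f 0 := by
  rw [← sum_range_tsub hf, prefixSum, sum_filter,
    Fin.sum_univ_eq_sum_range (fun j ↦ if j < s then f (j + 1) - f j else 0), ← sum_filter]
  congr 1
  ext j
  simp [and_comm]

lemma prefixCard_eq_prefixSum (S : Finset (Fin n)) :
    prefixCard S = prefixSum fun j ↦ if j ∈ S then 1 else 0 := by
  ext s
  simp [prefixCard, prefixSum, filter_inter]

lemma prefixCard_zero (S : Finset (Fin n)) : prefixCard S 0 = 0 := by simp [prefixCard]

lemma prefixCard_self (S : Finset (Fin n)) : prefixCard S n = #S := by simp [prefixCard]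

lemma prefixCard_le_card (S : Finset (Fin n)) (s : ℕ) : prefixCard S s ≤ #S :=
  card_filter_le _ _

lemma prefixCard_min (S : Finset (Fin n)) (s : ℕ) : prefixCard S (min s n) = prefixCard S s := by
  simp [prefixCard]

lemma prefixCard_mono (S : Finset (Fin n)) : Monotone (prefixCard S) :=
  prefixCard_eq_prefixSum S ▸ prefixSum_mono _

lemma prefixCard_succ (S : Finset (Fin n)) (j : Fin n) :
    prefixCard S (j + 1) = prefixCard S j + if j ∈ S then 1 else 0 := by
  rw [prefixCard_eq_prefixSum, prefixSum_succ]

lemma prefixCard_sdiff_add_prefixCard_inter (S T : Finset (Fin n)) (s : ℕ) :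
    prefixCard (S \ T) s + prefixCard (S ∩ T) s = prefixCard S s := by
  simp only [prefixCard, ← card_sdiff_add_card_inter {j ∈ S | j.val < s} T]
  congr 2 <;> grind

lemma prefixCard_eq_of_forall_mem {S : Finset (Fin n)} {s u : ℕ} (hsu : s ≤ u)
    (h : ∀ t ∈ S, s ≤ t → u ≤ t) : prefixCard S s = prefixCard S u := by
  rw [prefixCard, prefixCard]
  congr 1
  exact filter_congr fun t ht ↦ ⟨fun hts ↦ hts.trans_le hsu, fun htu ↦
    not_le.1 fun hst ↦ (h t ht hst).not_gt htu⟩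

lemma exists_prefixCard_eq {S : Finset (Fin n)} {c : ℕ} (hc : c ≤ #S) :
    ∃ m, prefixCard S m = c := by
  suffices ∀ m ≤ n, c ≤ prefixCard S m → ∃ m, prefixCard S m = c from
    this n le_rfl (prefixCard_self S ▸ hc)
  intro m hm hcm
  induction m with
  | zero => exact ⟨0, by rw [prefixCard_zero] at *; omega⟩
  | succ m ih =>
    by_cases h : c ≤ prefixCard S m
    · exact ih (by omega) h
    · have hsucc := prefixCard_succ S ⟨m, hm⟩
      exact ⟨m + 1, by grind⟩

end PrefixSums

section Encoding

variable {n : ℕ}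

/-- The positions of the nonzero coordinates of `a`. -/
def tupleSupport (a : Fin n → ℕ) : Finset (Fin n) := {j | a j ≠ 0}

open Classical in
/-- The nonzero partial sums of `a`. As `Fin n` starts at `0`, the element `t` stands for the
value `t + 1`; values larger than `n` are discarded. -/
noncomputable def prefixSumSet (a : Fin n → ℕ) : Finset (Fin n) :=
  {t | ∃ s, prefixSum a s = t + 1}

/-- The tuple `a` is the one encoded by the pair `(S, T)`: its partial sums are
`prefixSum a s = min {m | |S ∩ [s]| ≤ |T ∩ [m]|}`. -/
def IsEncodedBy (a : Fin n → ℕ) (S T : Finset (Fin n)) : Prop :=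
  ∀ s m, prefixSum a s ≤ m ↔ prefixCard S s ≤ prefixCard T m

lemma mem_tupleSupport {a : Fin n → ℕ} {j : Fin n} : j ∈ tupleSupport a ↔ a j ≠ 0 :=
  mem_filter_univ j

lemma mem_prefixSumSet {a : Fin n → ℕ} {t : Fin n} :
    t ∈ prefixSumSet a ↔ ∃ s, prefixSum a s = t + 1 := by
  classical exact mem_filter_univ t

lemma mem_tupleSupport_iff_exists {a : Fin n → ℕ} {j : Fin n} :
    j ∈ tupleSupport a ↔ ∃ m, prefixSum a j ≤ m ∧ ¬ prefixSum a (j + 1) ≤ m := by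
  rw [mem_tupleSupport, prefixSum_succ]
  exact ⟨fun h ↦ ⟨prefixSum a j, le_rfl, by omega⟩, by omega⟩

lemma mem_prefixSumSet_iff_exists {a : Fin n → ℕ} {t : Fin n} :
    t ∈ prefixSumSet a ↔ ∃ s, ¬ prefixSum a s ≤ t ∧ prefixSum a s ≤ t + 1 := by
  rw [mem_prefixSumSet]
  exact exists_congr fun s ↦ by omega

lemma mem_iff_exists_prefixCard_le_of_card_le {S T : Finset (Fin n)} (h : #S ≤ #T) {j : Fin n} :
    j ∈ S ↔ ∃ m, prefixCard S j ≤ prefixCard T m ∧ ¬ prefixCard S (j + 1) ≤ prefixCard T m := by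
  obtain ⟨m, hm⟩ := exists_prefixCard_eq ((prefixCard_le_card S j).trans h)
  have hsucc := prefixCard_succ S j
  exact ⟨fun hj ↦ ⟨m, by grind⟩, by grind⟩

lemma mem_iff_exists_lt_prefixCard_of_card_le {S T : Finset (Fin n)} (h : #T ≤ #S) {t : Fin n} :
    t ∈ T ↔ ∃ s, ¬ prefixCard S s ≤ prefixCard T t ∧ prefixCard S s ≤ prefixCard T (t + 1) := by
  obtain ⟨s, hs⟩ := exists_prefixCard_eq ((prefixCard_le_card T (t + 1)).trans h)
  have hsucc := prefixCard_succ T t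
  exact ⟨fun ht ↦ ⟨s, by grind⟩, by grind⟩

lemma exists_mem_prefixSumSet {a : Fin n → ℕ} (ha : prefixSum a n ≤ n) {s : ℕ}
    (hs : 0 < prefixSum a s) : ∃ t ∈ prefixSumSet a, prefixSum a s = t + 1 := by
  have hsn := (prefixSum_le_prefixSum_self a s).trans ha
  have hpred := (Nat.sub_add_cancel hs).symm
  exact ⟨⟨prefixSum a s - 1, by omega⟩, mem_prefixSumSet.2 ⟨s, hpred⟩, hpred⟩

lemma prefixCard_prefixSumSet_prefixSum_succ {a : Fin n → ℕ} (ha : prefixSum a n ≤ n)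
    (j : Fin n) :
    prefixCard (prefixSumSet a) (prefixSum a (j + 1)) =
      prefixCard (prefixSumSet a) (prefixSum a j) + if j ∈ tupleSupport a then 1 else 0 := by
  have hsucc := prefixSum_succ a j
  split_ifs with hj
  · rw [mem_tupleSupport] at hj
    obtain ⟨t, ht, hjt⟩ := exists_mem_prefixSumSet ha (s := j + 1) (by omega)
    have hgap : prefixCard (prefixSumSet a) (prefixSum a j) = prefixCard (prefixSumSet a) t := by
      refine prefixCard_eq_of_forall_mem (by omega) fun u hu hju ↦ ?_
      obtain ⟨s, hs⟩ := mem_prefixSumSet.1 hu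
      rcases le_or_gt s j with hsj | hjs
      · have := prefixSum_mono a hsj
        omega
      · have := prefixSum_mono a (show j + 1 ≤ s from hjs)
        omega
    rw [hjt, prefixCard_succ, if_pos ht, hgap]
  · rw [hsucc, not_not.1 (mem_tupleSupport.not.1 hj), add_zero, add_zero]

lemma prefixCard_prefixSumSet_prefixSum {a : Fin n → ℕ} (ha : prefixSum a n ≤ n) (s : ℕ) :
    prefixCard (prefixSumSet a) (prefixSum a s) = prefixCard (tupleSupport a) s := by
  suffices ∀ s ≤ n,
      prefixCard (prefixSumSet a) (prefixSum a s) = prefixCard (tupleSupport a) s by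
    rw [← prefixSum_min, ← prefixCard_min (tupleSupport a)]
    exact this _ (min_le_right s n)
  intro s hs
  induction s with
  | zero => rw [prefixSum_zero, prefixCard_zero, prefixCard_zero]
  | succ s ih =>
    rw [prefixCard_prefixSumSet_prefixSum_succ ha ⟨s, hs⟩, prefixCard_succ _ ⟨s, hs⟩,
      ih (Nat.le_of_succ_le hs)]

lemma isEncodedBy_tupleSupport_prefixSumSet {a : Fin n → ℕ} (ha : prefixSum a n ≤ n) :
    IsEncodedBy a (tupleSupport a) (prefixSumSet a) := by
  intro s m
  rw [← prefixCard_prefixSumSet_prefixSum ha]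
  refine ⟨fun h ↦ prefixCard_mono _ h, fun h ↦ ?_⟩
  by_contra! hm
  obtain ⟨t, ht, hst⟩ := exists_mem_prefixSumSet ha (Nat.zero_lt_of_lt hm)
  have hmt := prefixCard_mono (prefixSumSet a) (show m ≤ t by omega)
  rw [hst, prefixCard_succ, if_pos ht] at h
  omega

lemma card_tupleSupport_eq_card_prefixSumSet {a : Fin n → ℕ} (ha : prefixSum a n ≤ n) :
    #(tupleSupport a) = #(prefixSumSet a) := by
  have hbound : ∀ t ∈ prefixSumSet a, prefixSum a n ≤ t → n ≤ t := fun t ht hnt ↦ by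
    obtain ⟨s, hs⟩ := mem_prefixSumSet.1 ht
    have := prefixSum_le_prefixSum_self a s
    omega
  rw [← prefixCard_self, ← prefixCard_prefixSumSet_prefixSum ha,
    prefixCard_eq_of_forall_mem ha hbound, prefixCard_self]

theorem exists_isEncodedBy {S T : Finset (Fin n)} (h : #S ≤ #T) : ∃ a, IsEncodedBy a S T := by
  have hex (s : ℕ) : ∃ m, prefixCard S s ≤ prefixCard T m :=
    ⟨n, (prefixCard_le_card S s).trans (h.trans_eq (prefixCard_self T).symm)⟩
  let f : ℕ → ℕ := fun s ↦ Nat.find (hex s)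
  have hf (s m : ℕ) : f s ≤ m ↔ prefixCard S s ≤ prefixCard T m :=
    ⟨fun hsm ↦ (Nat.find_spec (hex s)).trans (prefixCard_mono T hsm), Nat.find_min' (hex s)⟩
  have hf_zero : f 0 = 0 := Nat.le_zero.1 <| (hf 0 0).2 <| by simp [prefixCard_zero]
  have hf_mono : Monotone f := fun s u hsu ↦
    (hf s _).2 ((prefixCard_mono S hsu).trans ((hf u _).1 le_rfl))
  refine ⟨fun j ↦ f (j + 1) - f j, fun s m ↦ ?_⟩
  rw [prefixSum_tsub hf_mono, hf_zero, Nat.sub_zero, hf, prefixCard_min]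

namespace IsEncodedBy

variable {a b : Fin n → ℕ} {S T : Finset (Fin n)}

lemma unique (ha : IsEncodedBy a S T) (hb : IsEncodedBy b S T) : a = b :=
  prefixSum_injective <| funext fun s ↦ eq_of_forall_ge_iff fun m ↦ (ha s m).trans (hb s m).symm

lemma tupleSupport_eq (ha : IsEncodedBy a S T) (h : #S ≤ #T) : tupleSupport a = S := by
  ext j
  rw [mem_tupleSupport_iff_exists, mem_iff_exists_prefixCard_le_of_card_le h]
  exact exists_congr fun m ↦ by rw [ha, ha]

lemma prefixSumSet_eq (ha : IsEncodedBy a S T) (h : #T ≤ #S) : prefixSumSet a = T := by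
  ext t
  rw [mem_prefixSumSet_iff_exists, mem_iff_exists_lt_prefixCard_of_card_le h]
  exact exists_congr fun s ↦ by rw [ha, ha]

end IsEncodedBy

end Encoding

section Domination

variable {n : ℕ} {σ : List ℕ}

/-- The pairs `(S, T)` of equinumerous sets encoding the tuples whose sum of the first `s`
coordinates is at most `s` for every `s ∈ A`. -/
def IsDominatedOn (A : Set ℕ) (S T : Finset (Fin n)) : Prop :=
  #S = #T ∧ ∀ s ∈ A, prefixCard S s ≤ prefixCard T s

lemma isDominatedOn_sdiff_iff {A : Set ℕ} {S T : Finset (Fin n)} :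
    IsDominatedOn A (S \ T) (T \ S) ↔ IsDominatedOn A S T := by
  simp only [IsDominatedOn, ← prefixCard_self,
    ← prefixCard_sdiff_add_prefixCard_inter S T, ← prefixCard_sdiff_add_prefixCard_inter T S,
    inter_comm T S, add_left_inj, add_le_add_iff_right]

/-- The partial sums `s₁, …, s_k` of the composition `σ = (r₁, …, r_k)`. -/
def breakpoints (σ : List ℕ) : Set ℕ := pSum σ '' Set.Icc 1 σ.length

lemma sum_mem_breakpoints (hσ : 0 < σ.sum) : σ.sum ∈ breakpoints σ := by
  refine ⟨σ.length, ⟨?_, le_rfl⟩, by simp [pSum]⟩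
  exact List.length_pos_iff.2 fun h ↦ by simp [h] at hσ

lemma memP_iff_forall_breakpoints {a : Fin n → ℕ} :
    memP n σ a ↔ ∀ s ∈ breakpoints σ, prefixSum a s ≤ s := by
  rw [breakpoints, Set.forall_mem_image]
  simp only [memP, prefixSum, Set.mem_Icc, and_imp]

lemma IsEncodedBy.memP_iff_isDominatedOn {a : Fin n → ℕ} {S T : Finset (Fin n)}
    (ha : IsEncodedBy a S T) (h : #S = #T) :
    memP n σ a ↔ IsDominatedOn (breakpoints σ) S T := by
  rw [memP_iff_forall_breakpoints, IsDominatedOn, and_iff_right h]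
  exact forall₂_congr fun s _ ↦ ha s s

open scoped Classical in
theorem hVec_eq_card_isDominatedOn (hn : 0 < n) (hsum : σ.sum = n) (i : ℕ) :
    hVec n σ i = #{p : Finset (Fin n) × Finset (Fin n) |
      IsDominatedOn (breakpoints σ) p.1 p.2 ∧ #p.1 = i} := by
  have htotal {a : Fin n → ℕ} (ha : memP n σ a) : prefixSum a n ≤ n :=
    memP_iff_forall_breakpoints.1 ha n (hsum ▸ sum_mem_breakpoints (hsum ▸ hn))
  rw [hVec, ← Set.ncard_coe_finset]
  refine Set.ncard_congr (fun a _ ↦ (tupleSupport a, prefixSumSet a)) ?_ ?_ ?_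
  · rintro a ⟨ha, hi⟩
    have henc := isEncodedBy_tupleSupport_prefixSumSet (htotal ha)
    have hcard := card_tupleSupport_eq_card_prefixSumSet (htotal ha)
    simpa using ⟨(henc.memP_iff_isDominatedOn hcard).1 ha, hi⟩
  · rintro a b ⟨ha, -⟩ ⟨hb, -⟩ hab
    obtain ⟨hS, hT⟩ := Prod.mk.inj hab
    have henc := isEncodedBy_tupleSupport_prefixSumSet (htotal ha)
    rw [hS, hT] at henc
    exact henc.unique (isEncodedBy_tupleSupport_prefixSumSet (htotal hb))
  · rintro ⟨S, T⟩ h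
    obtain ⟨hdom, hi⟩ := (mem_filter_univ _).1 h
    obtain ⟨a, ha⟩ := exists_isEncodedBy hdom.1.le
    have hS := ha.tupleSupport_eq hdom.1.le
    refine ⟨a, ⟨(ha.memP_iff_isDominatedOn hdom.1).2 hdom, ?_⟩, ?_⟩
    · rw [← hi, ← hS]
      rfl
    · rw [hS, ha.prefixSumSet_eq hdom.1.ge]

end Domination

/-- Gamma-positivity of `h(σ,t)` for every composition `σ` of `n`. -/
theorem hPoly_gamma_positive (n : ℕ) (hn : 0 < n) (σ : List ℕ)
    (hpos : ∀ r ∈ σ, 0 < r) (hsum : σ.sum = n) :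
    ∃ γ : ℕ → ℕ,
      (∑ i ∈ Finset.range (n + 1), Polynomial.C (hVec n σ i) * X ^ i : Polynomial ℕ) =
        ∑ i ∈ Finset.range (n / 2 + 1),
          Polynomial.C (γ i) * X ^ i * (1 + X) ^ (n - 2 * i) := by
  classical
  let P : Finset (Fin n) → Finset (Fin n) → Prop := IsDominatedOn (breakpoints σ)
  refine ⟨fun i ↦ #{q : Finset (Fin n) × Finset (Fin n) |
    (Disjoint q.1 q.2 ∧ P q.1 q.2) ∧ #q.1 = i}, ?_⟩
  simp_rw [← filter_filter _ fun q : Finset (Fin n) × Finset (Fin n) ↦ #q.1 = _,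
    mul_assoc, ← smul_eq_C_mul]
  calc ∑ i ∈ range (n + 1), hVec n σ i • (X : ℕ[X]) ^ i
      = ∑ p : Finset (Fin n) × Finset (Fin n) with P p.1 p.2, X ^ #p.1 := by
        simp_rw [hVec_eq_card_isDominatedOn hn hsum, ← filter_filter]
        exact (sum_comp_eq_sum_range_card_smul _
          (fun p _ ↦ Nat.lt_succ_of_le (card_finset_fin_le p.1)) fun i ↦ (X : ℕ[X]) ^ i).symm
    _ = ∑ q : Finset (Fin n) × Finset (Fin n) with Disjoint q.1 q.2 ∧ P q.1 q.2,
          X ^ #q.1 * (1 + X) ^ (n - 2 * #q.1) := by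
        simpa only [Fintype.card_fin] using sum_pow_card_eq_sum_disjoint P
          (fun _ _ h ↦ h.1) (fun _ _ ↦ isDominatedOn_sdiff_iff) (X : ℕ[X])
    _ = _ := by
        refine sum_comp_eq_sum_range_card_smul _ (fun q hq ↦ ?_)
          fun i ↦ (X : ℕ[X]) ^ i * (1 + X) ^ (n - 2 * i)
        obtain ⟨hdisj, hP⟩ := (mem_filter_univ _).1 hq
        have := two_mul_card_le_of_disjoint hdisj hP.1
        rw [Fintype.card_fin] at this
        omega
end

section
/- For every composition σ = (r_1,...,r_k) of a positive integer n, the vector (h_0(σ), h_1(σ), ..., h_n(σ)) is palindromic: h_i(σ) = h_{n-i}(σ) for all 0 ≤ i ≤ n. -/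
open Finset Polynomial

/-!
Weight a point `a` by `t ^ (number of nonzero coordinates) * (X + 1) ^ slack`, where the slack is
what remains of the last bound after subtracting `∑ a j`. Raising the bound by `r` multiplies the
generating polynomial by `(X + 1) ^ r`, and appending a coordinate applies `p ↦ p + t divX p`.
This map is multiplication by `X + t` followed by `divX`, and it commutes with `divX`, so a block
of size `r` multiplies by `((X + t)(X + 1)) ^ r` and then applies `divX ^ r`. As
`(t X + t)(t X + 1) = t² (X + t⁻¹)(X + 1)`, substituting `t X` for `X` amounts to replacing `t` by
`t⁻¹`, up to a power of `t`. At `X = 0`, with `t` the variable of `ℕ[T;T⁻¹]`, this says that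
`∑ h_i t ^ i` is self-reciprocal.
-/

section Polynomial

variable {R : Type*}

theorem coeff_divX_iterate [Semiring R] (p : R[X]) (r k : ℕ) :
    (divX^[r] p).coeff k = p.coeff (k + r) := by
  induction r generalizing k with
  | zero => rfl
  | succ r ih => rw [Function.iterate_succ_apply', coeff_divX, ih, add_right_comm, add_assoc]

theorem divX_X_add_one_pow [Semiring R] (s : ℕ) :
    divX ((X + 1 : R[X]) ^ s) = ∑ j ∈ range s, (X + 1) ^ j := by
  ext k
  rw [← geom_sum_mul_add, coeff_divX, coeff_add, coeff_mul_X, coeff_one, if_neg k.succ_ne_zero,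
    add_zero]

theorem divX_iterate_C_mul [Semiring R] (c : R) (p : R[X]) (r : ℕ) :
    divX^[r] (C c * p) = C c * divX^[r] p := by
  ext k
  simp only [coeff_divX_iterate, coeff_C_mul]

theorem divX_iterate_succ_X_add_C_mul [Semiring R] (t : R) (p : R[X]) (r : ℕ) :
    divX^[r + 1] ((X + C t) * p) = divX^[r] p + C t * divX (divX^[r] p) := by
  ext k
  simp only [coeff_divX_iterate, coeff_divX, add_mul, coeff_add, coeff_C_mul, ← add_assoc,
    coeff_X_mul, add_right_comm k 1 r]

theorem divX_iterate_comp_C_mul_X [CommSemiring R] (t : R) (p : R[X]) (r : ℕ) :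
    divX^[r] (p.comp (C t * X)) = C (t ^ r) * (divX^[r] p).comp (C t * X) := by
  ext k
  simp only [coeff_divX_iterate, comp_C_mul_X_coeff, coeff_C_mul, pow_add]
  ring

end Polynomial

section Membership

variable {m : ℕ}

theorem pSum_le_sum (σ : List ℕ) (i : ℕ) : pSum σ i ≤ σ.sum :=
  (List.take_sublist i σ).sum_le_sum fun _ _ ↦ Nat.zero_le _

theorem memP_snoc_iff {σ : List ℕ} (hσ : σ.sum ≤ m) (a : Fin m → ℕ) (x : ℕ) :
    memP (m + 1) σ (Fin.snoc a x) ↔ memP m σ a := by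
  refine forall_congr' fun i ↦ forall₂_congr fun _ _ ↦ ?_
  have hi : ¬m < pSum σ i := ((pSum_le_sum σ i).trans hσ).not_gt
  simp only [sum_filter, Fin.sum_univ_castSucc, Fin.snoc_castSucc, Fin.snoc_last,
    Fin.val_castSucc, Fin.val_last, if_neg hi, add_zero]

theorem memP_append_singleton_iff {σ : List ℕ} {r : ℕ} (hm : m ≤ σ.sum + r) (a : Fin m → ℕ) :
    memP m (σ ++ [r]) a ↔ memP m σ a ∧ ∑ j, a j ≤ σ.sum + r := by
  have pSum_last : pSum (σ ++ [r]) (σ.length + 1) = σ.sum + r := by simp [pSum]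
  have pSum_init : ∀ i ≤ σ.length, pSum (σ ++ [r]) i = pSum σ i := fun i hi ↦ by
    rw [pSum, List.take_append_of_le_length hi, pSum]
  have last_iff : (∑ j with (j : Fin m).val < pSum (σ ++ [r]) (σ.length + 1), a j)
      ≤ pSum (σ ++ [r]) (σ.length + 1) ↔ ∑ j, a j ≤ σ.sum + r := by
    rw [pSum_last, filter_true_of_mem fun j _ ↦ j.isLt.trans_le hm]
  rw [← last_iff]
  simp only [memP, List.length_append, List.length_singleton]
  refine ⟨fun h ↦ ⟨fun i h1 hi ↦ ?_, h _ (by omega) le_rfl⟩, fun ⟨h, hlast⟩ i h1 hi ↦ ?_⟩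
  · simpa only [pSum_init i hi] using h i h1 (by omega)
  · obtain hi | rfl := Nat.le_succ_iff.mp hi
    · simpa only [pSum_init i hi] using h i h1 hi
    · exact hlast

theorem memP.sum_le {σ : List ℕ} (hm : m ≤ σ.sum) {a : Fin m → ℕ} (ha : memP m σ a) :
    ∑ j, a j ≤ σ.sum := by
  obtain rfl | ⟨τ, r, rfl⟩ := List.eq_nil_or_concat' σ
  · obtain rfl : m = 0 := Nat.le_zero.mp hm
    simp
  · rw [List.sum_append, List.sum_singleton] at hm ⊢
    exact ((memP_append_singleton_iff hm a).mp ha).2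

theorem nonzeroCount_snoc (a : Fin m → ℕ) (x : ℕ) :
    nonzeroCount (Fin.snoc a x : Fin (m + 1) → ℕ) = nonzeroCount a + if x = 0 then 0 else 1 := by
  simp only [nonzeroCount, card_filter, Fin.sum_univ_castSucc, Fin.snoc_castSucc, Fin.snoc_last,
    ne_eq, ite_not]

end Membership

section BoundedPoints

open Classical in
/-- The `m`-tuples satisfying the constraints of `σ` and having total at most `N`. For
`m = N = σ.sum` this is `P_σ`; the other values of `m` and `N` occur while `P_σ` is built up one
coordinate at a time. -/
noncomputable def boundedPoints (m N : ℕ) (σ : List ℕ) : Finset (Fin m → ℕ) :=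
  {a ∈ Iic fun _ ↦ N | memP m σ a ∧ ∑ j, a j ≤ N}

variable {m N : ℕ} {σ : List ℕ}

theorem mem_boundedPoints {a : Fin m → ℕ} :
    a ∈ boundedPoints m N σ ↔ memP m σ a ∧ ∑ j, a j ≤ N := by
  simp only [boundedPoints, mem_filter, mem_Iic, and_iff_right_iff_imp]
  exact fun ⟨_, hN⟩ j ↦ (single_le_sum (fun _ _ ↦ Nat.zero_le _) (mem_univ j)).trans hN

theorem mem_boundedPoints_of_sum_le (hm : m ≤ σ.sum) (hN : σ.sum ≤ N) {a : Fin m → ℕ} :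
    a ∈ boundedPoints m N σ ↔ memP m σ a :=
  mem_boundedPoints.trans <| and_iff_left_of_imp fun ha ↦ (ha.sum_le hm).trans hN

theorem boundedPoints_append_singleton {r : ℕ} (hm : m ≤ σ.sum + r) :
    boundedPoints m (σ.sum + r) (σ ++ [r]) = boundedPoints m (σ.sum + r) σ := by
  ext a
  rw [mem_boundedPoints, mem_boundedPoints, memP_append_singleton_iff hm, and_assoc, and_self]

theorem sum_boundedPoints_succ {M : Type*} [AddCommMonoid M] (hσ : σ.sum ≤ m)
    (f : (Fin (m + 1) → ℕ) → M) :
    ∑ b ∈ boundedPoints (m + 1) N σ, f b =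
      ∑ a ∈ boundedPoints m N σ, ∑ x ∈ range (N - ∑ j, a j + 1), f (Fin.snoc a x) := by
  have snoc_mem_iff (a : Fin m → ℕ) (x : ℕ) :
      (Fin.snoc a x : Fin (m + 1) → ℕ) ∈ boundedPoints (m + 1) N σ ↔
        a ∈ boundedPoints m N σ ∧ x ∈ range (N - ∑ j, a j + 1) := by
    simp only [mem_boundedPoints, memP_snoc_iff hσ, Fin.sum_snoc, mem_range, and_assoc]
    exact and_congr_right fun _ ↦ by omega
  rw [sum_sigma']
  refine sum_bij' (fun b _ ↦ ⟨Fin.init b, b (Fin.last m)⟩) (fun p _ ↦ Fin.snoc p.1 p.2)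
    (fun b hb ↦ ?_) (fun p hp ↦ ?_) (fun b _ ↦ Fin.snoc_init_self b) (fun p _ ↦ ?_)
    (fun b _ ↦ ?_)
  · rwa [mem_sigma, ← snoc_mem_iff, Fin.snoc_init_self]
  · exact (snoc_mem_iff _ _).mpr (mem_sigma.mp hp)
  · simp only [Fin.init_snoc, Fin.snoc_last]
  · simp only [Fin.snoc_init_self]

theorem hVec_sum_eq_card (σ : List ℕ) (i : ℕ) :
    hVec σ.sum σ i = #{a ∈ boundedPoints σ.sum σ.sum σ | nonzeroCount a = i} := by
  simp only [hVec, ← Set.ncard_coe_finset, coe_filter,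
    mem_boundedPoints_of_sum_le le_rfl le_rfl]

end BoundedPoints

section SlackPolynomial

variable {R : Type*} [CommSemiring R]

/-- The generating polynomial of `boundedPoints m N σ`, in which `t` marks the nonzero coordinates
and `X + 1` (rather than `X`) marks the slack `N - ∑ j, a j`. -/
noncomputable def slackPoly (t : R) (m N : ℕ) (σ : List ℕ) : R[X] :=
  ∑ a ∈ boundedPoints m N σ, C (t ^ nonzeroCount a) * (X + 1) ^ (N - ∑ j, a j)

variable (t : R) {m : ℕ} {σ : List ℕ}

theorem sum_range_pow_mul_X_add_one_pow (c s : ℕ) :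
    ∑ x ∈ range (s + 1), C (t ^ (c + if x = 0 then 0 else 1)) * (X + 1) ^ (s - x) =
      C (t ^ c) * (X + 1) ^ s + C t * divX (C (t ^ c) * (X + 1) ^ s) := by
  rw [divX_C_mul, divX_X_add_one_pow, ← sum_range_reflect (fun j ↦ (X + 1) ^ j) s,
    sum_range_succ', add_comm]
  simp only [mul_sum, if_true, Nat.add_one_ne_zero, if_false, add_zero, Nat.sub_zero, pow_succ',
    C_mul, Nat.sub_sub, add_comm 1, mul_assoc]

theorem slackPoly_succ (hσ : σ.sum ≤ m) (N : ℕ) :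
    slackPoly t (m + 1) N σ = slackPoly t m N σ + C t * divX (slackPoly t m N σ) := by
  have divX_slackPoly : divX (slackPoly t m N σ) =
      ∑ a ∈ boundedPoints m N σ, divX (C (t ^ nonzeroCount a) * (X + 1) ^ (N - ∑ j, a j)) :=
    map_sum divX_hom _ _
  rw [divX_slackPoly, slackPoly, sum_boundedPoints_succ hσ, slackPoly, mul_sum, ← sum_add_distrib]
  refine sum_congr rfl fun a _ ↦ ?_
  rw [← sum_range_pow_mul_X_add_one_pow]
  simp only [nonzeroCount_snoc, Fin.sum_snoc, Nat.sub_sub]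

theorem slackPoly_add_left (hσ : σ.sum ≤ m) (N r : ℕ) :
    slackPoly t (m + r) N σ = divX^[r] ((X + C t) ^ r * slackPoly t m N σ) := by
  induction r with
  | zero => simp
  | succ r ih =>
    rw [← add_assoc, slackPoly_succ t (hσ.trans (m.le_add_right r)), ih, pow_succ', mul_assoc,
      divX_iterate_succ_X_add_C_mul]

theorem slackPoly_add_right (hm : m ≤ σ.sum) (r : ℕ) :
    slackPoly t m (σ.sum + r) σ = (X + 1) ^ r * slackPoly t m σ.sum σ := by
  have points_eq : boundedPoints m (σ.sum + r) σ = boundedPoints m σ.sum σ := by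
    ext a
    rw [mem_boundedPoints_of_sum_le hm (Nat.le_add_right _ _),
      mem_boundedPoints_of_sum_le hm le_rfl]
  rw [slackPoly, slackPoly, points_eq, mul_sum]
  refine sum_congr rfl fun a ha ↦ ?_
  rw [Nat.sub_add_comm (mem_boundedPoints.mp ha).2, pow_add]
  ring

theorem slackPoly_nil : slackPoly t 0 0 [] = 1 := by
  have points_eq : boundedPoints 0 0 [] = univ :=
    eq_univ_of_forall fun a ↦ mem_boundedPoints.mpr (by simp [memP])
  simp [slackPoly, points_eq, nonzeroCount]

theorem slackPoly_append_singleton (σ : List ℕ) (r : ℕ) :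
    slackPoly t (σ ++ [r]).sum (σ ++ [r]).sum (σ ++ [r]) =
      divX^[r] (((X + C t) * (X + 1)) ^ r * slackPoly t σ.sum σ.sum σ) := by
  rw [List.sum_append, List.sum_singleton, slackPoly, boundedPoints_append_singleton le_rfl,
    ← slackPoly, slackPoly_add_left t le_rfl, slackPoly_add_right t le_rfl, mul_pow, mul_assoc]

theorem coeff_zero_slackPoly (m N : ℕ) (σ : List ℕ) :
    (slackPoly t m N σ).coeff 0 = ∑ a ∈ boundedPoints m N σ, t ^ nonzeroCount a := by
  simp [slackPoly, coeff_zero_eq_eval_zero, eval_finsetSum]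

variable {t} {t' : R}

theorem X_add_C_mul_X_add_one_comp (ht : t * t' = 1) :
    ((X + C t) * (X + 1)).comp (C t * X) = C (t ^ 2) * ((X + C t') * (X + 1)) := by
  have hC : C t * C t' = 1 := by rw [← C_mul, ht, C_1]
  calc ((X + C t) * (X + 1)).comp (C t * X)
      = C t * (X + 1) * (C t * X + 1) := by
        simp only [mul_comp, add_comp, X_comp, C_comp, one_comp]
        ring
    _ = C t * (X + 1) * (C t * X + C t * C t') := by rw [hC]
    _ = C (t ^ 2) * ((X + C t') * (X + 1)) := by
        rw [C_pow]
        ring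

theorem slackPoly_comp_C_mul_X (ht : t * t' = 1) (σ : List ℕ) :
    (slackPoly t σ.sum σ.sum σ).comp (C t * X) =
      C (t ^ σ.sum) * slackPoly t' σ.sum σ.sum σ := by
  induction σ using List.reverseRecOn with
  | nil => simp [slackPoly_nil]
  | append_singleton σ r ih =>
    have unit_pow : IsUnit (C (t ^ r)) := ((IsUnit.of_mul_eq_one t' ht).pow r).map C
    apply unit_pow.mul_left_cancel
    rw [slackPoly_append_singleton, slackPoly_append_singleton, ← divX_iterate_comp_C_mul_X,
      mul_comp, pow_comp, X_add_C_mul_X_add_one_comp ht, ih, List.sum_append, List.sum_singleton,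
      ← divX_iterate_C_mul, ← divX_iterate_C_mul]
    congr 1
    simp only [C_pow, mul_pow]
    ring

theorem sum_pow_nonzeroCount_reciprocal (ht : t * t' = 1) (σ : List ℕ) :
    ∑ a ∈ boundedPoints σ.sum σ.sum σ, t ^ nonzeroCount a =
      t ^ σ.sum * ∑ a ∈ boundedPoints σ.sum σ.sum σ, t' ^ nonzeroCount a := by
  simpa only [comp_C_mul_X_coeff, coeff_C_mul, pow_zero, mul_one, coeff_zero_slackPoly]
    using congrArg (coeff · 0) (slackPoly_comp_C_mul_X ht σ)

end SlackPolynomial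

open LaurentPolynomial in
theorem sum_T_nonzeroCount_eq_sum_T_sub (σ : List ℕ) :
    ∑ a ∈ boundedPoints σ.sum σ.sum σ, (T (nonzeroCount a) : ℕ[T;T⁻¹]) =
      ∑ a ∈ boundedPoints σ.sum σ.sum σ, T (σ.sum - nonzeroCount a) := by
  have T_mul_T_neg : (T 1 * T (-1) : ℕ[T;T⁻¹]) = 1 := by rw [← T_add, add_neg_cancel, T_zero]
  simpa only [T_pow, mul_sum, ← T_add, mul_one, mul_neg, ← sub_eq_add_neg]
    using sum_pow_nonzeroCount_reciprocal T_mul_T_neg σ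

/-- The vector `(h_0(σ), …, h_n(σ))` is palindromic. -/
theorem hVec_palindromic (n : ℕ) (hn : 0 < n) (σ : List ℕ)
    (hpos : ∀ r ∈ σ, 0 < r) (hsum : σ.sum = n) :
    ∀ i ≤ n, hVec n σ i = hVec n σ (n - i) := by
  subst hsum
  intro i hi
  have coeff_eq := congrArg (AddMonoidAlgebra.coeff · (i : ℤ)) (sum_T_nonzeroCount_eq_sum_T_sub σ)
  simp only [AddMonoidAlgebra.coeff_sum, Finsupp.finsetSum_apply, LaurentPolynomial.T_apply,
    ← card_filter, Nat.cast_inj] at coeff_eq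
  have sub_eq_iff (c : ℕ) : (σ.sum : ℤ) - c = i ↔ c = σ.sum - i := by omega
  simpa only [hVec_sum_eq_card, sub_eq_iff] using coeff_eq
end

section
/- Let σ = (r_1,...,r_k) be a composition of a positive integer n. Let S, T ⊆ {1,...,n} with #S = #T, and let R ⊆ {1,...,n} be disjoint from S ∪ T. Then there exists x ∈ H_σ with S(x) = S and T(x) = T if and only if there exists y ∈ H_σ with S(y) = S ∪ R and T(y) = T ∪ R. -/
open Finset Polynomial

/-- Membership in `H_σ`: the nonzero entries appear in strictly increasing order
from left to right, and `p₁, …, p_{s_i} ≤ s_i` for every `i ∈ [k]`. -/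
def memH (n : ℕ) (σ : List ℕ) (p : Fin n → ℕ) : Prop :=
  (∀ j j' : Fin n, j < j' → p j ≠ 0 → p j' ≠ 0 → p j < p j') ∧
  (∀ i, 1 ≤ i → i ≤ σ.length → ∀ j : Fin n, (j : ℕ) < pSum σ i → p j ≤ pSum σ i)

/-- `S(x)`: the set of (1-indexed) positions of the nonzero entries of `x`. -/
def Spos {n : ℕ} (p : Fin n → ℕ) : Finset ℕ :=
  (Finset.univ.filter (fun j : Fin n => p j ≠ 0)).image (fun j : Fin n => (j : ℕ) + 1)

/-- `T(x)`: the set of nonzero entries of `x`. -/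
def Tset {n : ℕ} (p : Fin n → ℕ) : Finset ℕ :=
  (Finset.univ.filter (fun j : Fin n => p j ≠ 0)).image p

/-! A strictly increasing map on a finite set `S` is determined by its image `T`. Any two initial
segments of `S` are nested, so the bound `x_j ≤ s` at the positions `j ≤ s` only says that `S` has
at most as many elements `≤ s` as `T`. Adjoining to both `S` and `T` a set disjoint from them
changes the two counts by the same amount. -/

theorem exists_strictMonoOn_image_eq {α β : Type*} [LinearOrder α] [LinearOrder β]
    {A : Finset α} {T : Finset β} (hcard : #A = #T) (b : β) :
    ∃ f : α → β, StrictMonoOn f A ∧ A.image f = T ∧ ∀ a ∉ A, f a = b := by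
  let e : A ≃o T := (A.orderIsoOfFin rfl).symm.trans (T.orderIsoOfFin hcard.symm)
  let f : α → β := fun a => if ha : a ∈ A then e ⟨a, ha⟩ else b
  have f_apply (a : A) : f a = e a := dif_pos a.2
  refine ⟨f, fun a ha a' ha' haa' => ?_, ?_, fun a ha => dif_neg ha⟩
  · rw [f_apply ⟨a, ha⟩, f_apply ⟨a', ha'⟩]
    exact e.strictMono haa'
  · ext t
    rw [mem_image]
    constructor
    · rintro ⟨a, ha, rfl⟩
      exact f_apply ⟨a, ha⟩ ▸ (e ⟨a, ha⟩).2
    · intro ht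
      exact ⟨e.symm ⟨t, ht⟩, (e.symm ⟨t, ht⟩).2, by rw [f_apply, e.apply_symm_apply]⟩

theorem forall_mem_imp_iff_card_filter_le {α β : Type*} [LinearOrder α] [Preorder β]
    [DecidableEq β] {A : Finset α} {f : α → β} (hf : StrictMonoOn f A) {p : α → Prop} {q : β → Prop}
    [DecidablePred p] [DecidablePred q] (hp : Antitone p) (hq : Antitone q) :
    (∀ a ∈ A, p a → q (f a)) ↔ #{a ∈ A | p a} ≤ #{t ∈ A.image f | q t} := by
  have card_image : #{t ∈ A.image f | q t} = #{a ∈ A | q (f a)} := by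
    rw [filter_image, card_image_of_injOn (hf.injOn.mono (filter_subset _ A))]
  have nested : (∀ a ∈ A, p a → q (f a)) ∨ ∀ a ∈ A, q (f a) → p a := by
    by_contra! ⟨⟨a, ha, hpa, hqa⟩, a', ha', hqa', hpa'⟩
    rcases le_total a a' with h | h
    · exact hqa (hq (hf.monotoneOn ha ha' h) hqa')
    · exact hpa' (hp h hpa)
  rw [card_image]
  refine ⟨fun h => card_le_card (monotone_filter_right A h), fun hle => ?_⟩
  rcases nested with h | h
  · exact h
  · have filter_eq := eq_of_subset_of_card_le (monotone_filter_right A h) hle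
    exact fun a ha => (filter_inj'.mp filter_eq ha).mpr

theorem coe_filter_ne_zero {α β : Type*} [Fintype α] [Zero β] [DecidableEq β] (x : α → β) :
    (({a | x a ≠ 0} : Finset α) : Set α) = x.support :=
  coe_filter_univ _

section Tuples

variable {n : ℕ}

theorem Spos_subset_Icc (x : Fin n → ℕ) : Spos x ⊆ Icc 1 n := by
  intro a ha
  obtain ⟨j, -, rfl⟩ := mem_image.mp ha
  exact mem_Icc.mpr ⟨Nat.le_add_left 1 j, j.2⟩

theorem zero_notMem_Tset (x : Fin n → ℕ) : 0 ∉ Tset x := by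
  simp [Tset]

theorem val_add_one_injective : Function.Injective fun j : Fin n => (j : ℕ) + 1 :=
  (add_left_injective 1).comp Fin.val_injective

theorem card_Spos_eq_card_Tset {x : Fin n → ℕ} (hx : StrictMonoOn x x.support) :
    #(Spos x) = #(Tset x) := by
  rw [Spos, Tset, card_image_of_injective _ val_add_one_injective, card_image_of_injOn]
  exact coe_filter_ne_zero x ▸ hx.injOn

theorem card_filter_Spos (x : Fin n → ℕ) (s : ℕ) :
    #{a ∈ Spos x | a ≤ s} = #{j : Fin n | x j ≠ 0 ∧ (j : ℕ) < s} := by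
  rw [Spos, filter_image, filter_filter, card_image_of_injective _ val_add_one_injective]
  rfl

theorem forall_lt_imp_le_iff_card_filter_le {x : Fin n → ℕ} (hx : StrictMonoOn x x.support)
    (s : ℕ) :
    (∀ j : Fin n, (j : ℕ) < s → x j ≤ s) ↔ #{a ∈ Spos x | a ≤ s} ≤ #{t ∈ Tset x | t ≤ s} := by
  have antitone_lt : Antitone fun j : Fin n => (j : ℕ) < s :=
    fun _ _ h => (Fin.val_le_of_le h).trans_lt
  have antitone_le : Antitone fun t : ℕ => t ≤ s := fun _ _ h => h.trans
  rw [← coe_filter_ne_zero] at hx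
  rw [card_filter_Spos, Tset, ← filter_filter,
    ← forall_mem_imp_iff_card_filter_le hx antitone_lt antitone_le]
  refine forall_congr' fun j => ⟨fun h _ => h, fun h hj => ?_⟩
  rcases eq_or_ne (x j) 0 with hxj | hxj
  · exact hxj ▸ Nat.zero_le s
  · exact h ((mem_filter_univ j).mpr hxj) hj

theorem memH_iff_card_filter_le {σ : List ℕ} {x : Fin n → ℕ} :
    memH n σ x ↔ StrictMonoOn x x.support ∧ ∀ i, 1 ≤ i → i ≤ σ.length →
      #{a ∈ Spos x | a ≤ pSum σ i} ≤ #{t ∈ Tset x | t ≤ pSum σ i} := by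
  have strictMonoOn_iff :
      (∀ j j', j < j' → x j ≠ 0 → x j' ≠ 0 → x j < x j') ↔ StrictMonoOn x x.support :=
    ⟨fun h j hj j' hj' hlt => h j j' hlt hj hj', fun h j j' hlt hj hj' => h hj hj' hlt⟩
  rw [memH, strictMonoOn_iff]
  exact and_congr_right fun hx => forall₃_congr fun i _ _ =>
    forall_lt_imp_le_iff_card_filter_le hx (pSum σ i)

theorem image_filter_val_add_one_mem {S : Finset ℕ} (hS : S ⊆ Icc 1 n) :
    ({j : Fin n | (j : ℕ) + 1 ∈ S} : Finset (Fin n)).image (fun j : Fin n => (j : ℕ) + 1) = S := by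
  ext a
  simp only [mem_image, mem_filter_univ]
  constructor
  · rintro ⟨j, hj, rfl⟩
    exact hj
  · intro ha
    obtain ⟨one_le, le_n⟩ := mem_Icc.mp (hS ha)
    have pred_add_one : a - 1 + 1 = a := Nat.sub_add_cancel one_le
    exact ⟨⟨a - 1, by omega⟩, pred_add_one.symm ▸ ha, pred_add_one⟩

theorem exists_strictMonoOn_support_iff {S T : Finset ℕ} :
    (∃ x : Fin n → ℕ, StrictMonoOn x x.support ∧ Spos x = S ∧ Tset x = T) ↔
      S ⊆ Icc 1 n ∧ 0 ∉ T ∧ #S = #T := by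
  constructor
  · rintro ⟨x, hx, rfl, rfl⟩
    exact ⟨Spos_subset_Icc x, zero_notMem_Tset x, card_Spos_eq_card_Tset hx⟩
  · rintro ⟨hS, hT, hcard⟩
    have image_A := image_filter_val_add_one_mem hS
    set A : Finset (Fin n) := {j : Fin n | (j : ℕ) + 1 ∈ S}
    have card_A : #A = #T := by
      rw [← hcard, ← image_A, card_image_of_injective _ val_add_one_injective]
    obtain ⟨x, hmono, himage, hzero⟩ := exists_strictMonoOn_image_eq card_A 0
    have filter_ne_zero : ({j | x j ≠ 0} : Finset (Fin n)) = A := by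
      ext j
      rw [mem_filter_univ]
      refine ⟨fun hj => by_contra fun hjA => hj (hzero j hjA), fun hj hxj => hT ?_⟩
      exact himage ▸ hxj ▸ mem_image_of_mem x hj
    refine ⟨x, ?_, ?_, ?_⟩
    · rwa [← coe_filter_ne_zero, filter_ne_zero]
    · rw [Spos, filter_ne_zero, image_A]
    · rw [Tset, filter_ne_zero, himage]

theorem exists_memH_iff {σ : List ℕ} {S T : Finset ℕ} :
    (∃ x : Fin n → ℕ, memH n σ x ∧ Spos x = S ∧ Tset x = T) ↔
      (S ⊆ Icc 1 n ∧ 0 ∉ T ∧ #S = #T) ∧ ∀ i, 1 ≤ i → i ≤ σ.length →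
        #{a ∈ S | a ≤ pSum σ i} ≤ #{t ∈ T | t ≤ pSum σ i} := by
  rw [← exists_strictMonoOn_support_iff]
  constructor
  · rintro ⟨x, hx, rfl, rfl⟩
    obtain ⟨hmono, hcount⟩ := memH_iff_card_filter_le.mp hx
    exact ⟨⟨x, hmono, rfl, rfl⟩, hcount⟩
  · rintro ⟨⟨x, hmono, rfl, rfl⟩, hcount⟩
    exact ⟨x, memH_iff_card_filter_le.mpr ⟨hmono, hcount⟩, rfl, rfl⟩

end Tuples

theorem card_filter_union_of_disjoint {α : Type*} [DecidableEq α] {A B : Finset α}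
    (h : Disjoint A B) (p : α → Prop) [DecidablePred p] :
    #{a ∈ A ∪ B | p a} = #{a ∈ A | p a} + #{a ∈ B | p a} := by
  rw [filter_union, card_union_of_disjoint (disjoint_filter_filter h)]

theorem exists_memH_union_iff_general (n : ℕ) (σ : List ℕ) (S T R : Finset ℕ)
    (hR : R ⊆ Icc 1 n) (hdisj : Disjoint R (S ∪ T)) :
    (∃ x : Fin n → ℕ, memH n σ x ∧ Spos x = S ∧ Tset x = T) ↔
      ∃ y : Fin n → ℕ, memH n σ y ∧ Spos y = S ∪ R ∧ Tset y = T ∪ R := by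
  obtain ⟨hRS, hRT⟩ := disjoint_union_right.mp hdisj
  have zero_notMem_R : 0 ∉ R := fun h => by simpa using hR h
  simp only [exists_memH_iff, union_subset_iff, hR, and_true, mem_union, zero_notMem_R, or_false,
    card_union_of_disjoint hRS.symm, card_union_of_disjoint hRT.symm,
    card_filter_union_of_disjoint hRS.symm, card_filter_union_of_disjoint hRT.symm,
    add_le_add_iff_right, add_left_inj]

/-- A pair `(S, T)` is realized by some element of `H_σ` if and only if so is
`(S ∪ R, T ∪ R)`, for any `R ⊆ [n]` disjoint from `S ∪ T`. -/
theorem exists_memH_union_iff (n : ℕ) (hn : 0 < n) (σ : List ℕ)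
    (hpos : ∀ r ∈ σ, 0 < r) (hsum : σ.sum = n)
    (S T R : Finset ℕ) (hS : S ⊆ Finset.Icc 1 n) (hT : T ⊆ Finset.Icc 1 n)
    (hR : R ⊆ Finset.Icc 1 n) (hcard : S.card = T.card)
    (hdisj : Disjoint R (S ∪ T)) :
    (∃ x : Fin n → ℕ, memH n σ x ∧ Spos x = S ∧ Tset x = T) ↔
      (∃ y : Fin n → ℕ, memH n σ y ∧ Spos y = S ∪ R ∧ Tset y = T ∪ R) :=
  exists_memH_union_iff_general n σ S T R hR hdisj
end
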